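/- arXiv:2008.04752 — 7 statements merged into one kernel-verified Lean document; each statement's English description precedes it below -/
import Mathlib

section
/- For every a ∈ Ω, the P-module A is given by A = {x ∈ ℝ^d : ψ_a(x) ≥ 0}. -/
theorem stmt_5 {d : ℕ} (P A : Set (EuclideanSpace ℝ (Fin d)))
    (hPclosed : IsClosed P) (hPconvex : Convex ℝ P)
    (hPcone : ∀ c : ℝ, 0 ≤ c → ∀ x ∈ P, c • x ∈ P)
    (hPspan : Submodule.span ℝ P = ⊤)
    (hPline : ∀ x ∈ P, -x ∈ P → x = 0)
    (hAne : A.Nonempty) (hAclosed : IsClosed A)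
    (hAmod : ∀ x ∈ A, ∀ p ∈ P, x + p ∈ A)
    (hAproper : A ≠ Set.univ)
    (a : EuclideanSpace ℝ (Fin d)) (ha : a ∈ interior P) :
    A = {x : EuclideanSpace ℝ (Fin d) | 0 ≤ sSup {t : ℝ | x - t • a ∈ A}} := by
  have haP : a ∈ P := interior_subset ha
  have key : ∀ v : EuclideanSpace ℝ (Fin d), ∃ s : ℝ, s • a + v ∈ P := by
    intro v
    have hc : Filter.Tendsto (fun e : ℝ => a + e • v) (nhds 0) (nhds a) := by
      have h : Continuous (fun e : ℝ => a + e • v) := by fun_prop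
      simpa using h.tendsto 0
    have hev := hc (mem_interior_iff_mem_nhds.mp ha)
    obtain ⟨ε, hε, hb⟩ := Metric.mem_nhds_iff.mp hev
    have hm : a + (ε / 2) • v ∈ P := by
      apply hb
      rw [Metric.mem_ball, Real.dist_eq, sub_zero, abs_of_pos (by positivity)]
      linarith
    refine ⟨(ε / 2)⁻¹, ?_⟩
    have h2 := hPcone (ε / 2)⁻¹ (by positivity) _ hm
    rwa [smul_add, smul_smul, inv_mul_cancel₀ (by positivity), one_smul] at h2
  obtain ⟨y, hy⟩ := (Set.ne_univ_iff_exists_notMem A).mp hAproper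
  obtain ⟨z, hz⟩ := hAne
  ext x
  have hbdd : BddAbove {t : ℝ | x - t • a ∈ A} := by
    obtain ⟨s, hs⟩ := key (y - x)
    refine ⟨s, fun t ht => ?_⟩
    by_contra hlt
    push Not at hlt
    apply hy
    have h := hAmod _ (hAmod _ ht _ hs) _ (hPcone (t - s) (by linarith) a haP)
    convert h using 1
    module
  have hne : {t : ℝ | x - t • a ∈ A}.Nonempty := by
    obtain ⟨s, hs⟩ := key (x - z)
    refine ⟨-s, ?_⟩
    have h := hAmod _ hz _ hs
    show x - (-s) • a ∈ A
    convert h using 1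
    module
  have hcl : IsClosed {t : ℝ | x - t • a ∈ A} :=
    hAclosed.preimage (f := fun t : ℝ => x - t • a) (by fun_prop)
  constructor
  · intro hx
    exact le_csSup hbdd (by simpa using hx)
  · intro hx
    have hmem := hcl.csSup_mem hne hbdd
    have h := hAmod _ hmem _ (hPcone _ hx a haP)
    simpa using h
end

section
/- For every a ∈ Ω, the interior of A is given by Int(A) = {x ∈ ℝ^d : ψ_a(x) > 0}. -/
theorem stmt_7 {d : ℕ} (P A : Set (EuclideanSpace ℝ (Fin d)))
    (hPclosed : IsClosed P) (hPconvex : Convex ℝ P)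
    (hPcone : ∀ c : ℝ, 0 ≤ c → ∀ x ∈ P, c • x ∈ P)
    (hPspan : Submodule.span ℝ P = ⊤)
    (hPline : ∀ x ∈ P, -x ∈ P → x = 0)
    (hAne : A.Nonempty) (hAclosed : IsClosed A)
    (hAmod : ∀ x ∈ A, ∀ p ∈ P, x + p ∈ A)
    (hAproper : A ≠ Set.univ)
    (a : EuclideanSpace ℝ (Fin d)) (ha : a ∈ interior P) :
    interior A = {x : EuclideanSpace ℝ (Fin d) | 0 < sSup {t : ℝ | x - t • a ∈ A}} := by
  have hbdd : ∀ x, BddAbove {t : ℝ | x - t • a ∈ A} := by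
    intro x
    obtain ⟨y, hy⟩ := (Set.ne_univ_iff_exists_notMem A).1 hAproper
    have hc : Filter.Tendsto (fun s : ℝ => a + s • (y - x)) (nhds 0) (nhds a) := by
      have h : Continuous (fun s : ℝ => a + s • (y - x)) := by fun_prop
      simpa using h.tendsto 0
    have hev := (hc.comp tendsto_inv_atTop_zero).eventually (isOpen_interior.mem_nhds ha)
    obtain ⟨T, hT⟩ := Filter.eventually_atTop.1 (hev.and (Filter.eventually_gt_atTop 0))
    refine ⟨T, fun t ht => ?_⟩
    by_contra hlt
    obtain ⟨h1, h2⟩ := hT t (not_le.1 hlt).le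
    have h3 := hAmod _ ht _ (hPcone t h2.le _ (interior_subset h1))
    apply hy
    convert h3 using 1
    simp only [Function.comp, smul_add, smul_smul, mul_inv_cancel₀ h2.ne', one_smul]
    abel
  ext x
  simp only [Set.mem_setOf_eq]
  constructor
  · intro hx
    have hc : Filter.Tendsto (fun s : ℝ => x - s • a) (nhds 0) (nhds x) := by
      have h : Continuous (fun s : ℝ => x - s • a) := by fun_prop
      simpa using h.tendsto 0
    have hev := hc.eventually (isOpen_interior.mem_nhds hx)
    obtain ⟨e, he, h⟩ := Metric.eventually_nhds_iff.1 hev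
    have h1 : x - (e / 2) • a ∈ A := by
      refine interior_subset (h ?_)
      rw [Real.dist_eq, sub_zero, abs_of_pos (by positivity)]
      linarith
    exact lt_of_lt_of_le (half_pos he) (le_csSup (hbdd x) h1)
  · intro hx
    have hne : {t : ℝ | x - t • a ∈ A}.Nonempty := by
      by_contra h
      rw [Set.not_nonempty_iff_eq_empty.1 h, Real.sSup_empty] at hx
      exact lt_irrefl _ hx
    obtain ⟨t, ht, ht0⟩ := exists_lt_of_lt_csSup hne hx
    rw [mem_interior]
    refine ⟨(fun y => t⁻¹ • (y - (x - t • a))) ⁻¹' interior P, ?_, ?_, ?_⟩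
    · intro y hy
      have h3 := hAmod _ ht _ (hPcone t ht0.le _ (interior_subset hy))
      simpa [smul_smul, mul_inv_cancel₀ ht0.ne'] using h3
    · exact isOpen_interior.preimage (by fun_prop)
    · simpa [smul_smul, inv_mul_cancel₀ ht0.ne'] using ha
end

section
/- For every a ∈ Ω, the topological boundary of A is given by ∂A = {x ∈ ℝ^d : ψ_a(x) = 0}. -/
theorem stmt_8 {d : ℕ} (P A : Set (EuclideanSpace ℝ (Fin d)))
    (hPclosed : IsClosed P) (hPconvex : Convex ℝ P)
    (hPcone : ∀ c : ℝ, 0 ≤ c → ∀ x ∈ P, c • x ∈ P)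
    (hPspan : Submodule.span ℝ P = ⊤)
    (hPline : ∀ x ∈ P, -x ∈ P → x = 0)
    (hAne : A.Nonempty) (hAclosed : IsClosed A)
    (hAmod : ∀ x ∈ A, ∀ p ∈ P, x + p ∈ A)
    (hAproper : A ≠ Set.univ)
    (a : EuclideanSpace ℝ (Fin d)) (ha : a ∈ interior P) :
    frontier A = {x : EuclideanSpace ℝ (Fin d) | sSup {t : ℝ | x - t • a ∈ A} = 0} := by
  have haP : a ∈ P := interior_subset ha
  have hPn : P ∈ nhds a := mem_interior_iff_mem_nhds.mp ha
  -- absorption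
  have habs : ∀ v : EuclideanSpace ℝ (Fin d), ∃ T : ℝ, T • a + v ∈ P := by
    intro v
    have hc : Filter.Tendsto (fun e : ℝ => a + e • v) (nhds 0) (nhds a) := by
      have : Continuous (fun e : ℝ => a + e • v) := by fun_prop
      simpa using this.tendsto 0
    obtain ⟨δ, hδ, hb⟩ := Metric.eventually_nhds_iff.mp (hc hPn)
    have h1 : a + (δ / 2) • v ∈ P := by
      apply hb
      rw [Real.dist_eq, sub_zero, abs_of_pos (by positivity)]
      linarith
    refine ⟨(δ / 2)⁻¹, ?_⟩
    have h2 := hPcone (δ / 2)⁻¹ (by positivity) _ h1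
    rwa [smul_add, smul_smul, inv_mul_cancel₀ (by positivity), one_smul] at h2
  have hint : ∀ x ∈ A, ∀ s : ℝ, 0 < s → x + s • a ∈ interior A := by
    intro x hx s hs
    rw [mem_interior_iff_mem_nhds]
    have hc : Filter.Tendsto (fun y : EuclideanSpace ℝ (Fin d) => s⁻¹ • (y - x))
        (nhds (x + s • a)) (nhds a) := by
      have : Continuous (fun y : EuclideanSpace ℝ (Fin d) => s⁻¹ • (y - x)) := by fun_prop
      have h := this.tendsto (x + s • a)
      rwa [add_sub_cancel_left, smul_smul, inv_mul_cancel₀ hs.ne', one_smul] at h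
    filter_upwards [hc hPn] with y hy
    have h2 := hAmod x hx _ (hPcone s hs.le _ hy)
    rwa [smul_smul, mul_inv_cancel₀ hs.ne', one_smul, add_sub_cancel] at h2
  obtain ⟨y, hy⟩ := hAne
  obtain ⟨z, hz⟩ := (Set.ne_univ_iff_exists_notMem A).mp hAproper
  ext x
  have hcont : Continuous (fun t : ℝ => x - t • a) := by fun_prop
  have hne : {t : ℝ | x - t • a ∈ A}.Nonempty := by
    obtain ⟨T, hT⟩ := habs (x - y)
    refine ⟨-T, ?_⟩
    have h := hAmod y hy _ hT
    have e : y + (T • a + (x - y)) = x - (-T) • a := by module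
    rw [e] at h
    exact h
  have hbdd : BddAbove {t : ℝ | x - t • a ∈ A} := by
    obtain ⟨T, hT⟩ := habs (z - x)
    refine ⟨T, fun t ht => ?_⟩
    by_contra hlt
    push Not at hlt
    apply hz
    have h := hAmod _ (hAmod _ ht _ (hPcone (t - T) (by linarith) a haP)) _ hT
    have e : x - t • a + (t - T) • a + (T • a + (z - x)) = z := by module
    rwa [e] at h
  rw [Set.mem_setOf_eq, hAclosed.frontier_eq]
  constructor
  · rintro ⟨hxA, hxi⟩
    apply IsGreatest.csSup_eq
    refine ⟨by simpa using hxA, fun t ht => ?_⟩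
    by_contra hlt
    push Not at hlt
    apply hxi
    simpa using hint _ ht t hlt
  · intro h0
    have hcl : IsClosed {t : ℝ | x - t • a ∈ A} := hAclosed.preimage hcont
    have hmem := hcl.csSup_mem hne hbdd
    rw [h0] at hmem
    refine ⟨by simpa using hmem, fun hxi => ?_⟩
    have hc : Filter.Tendsto (fun t : ℝ => x - t • a) (nhds 0) (nhds x) := by
      simpa using hcont.tendsto 0
    obtain ⟨δ, hδ, hb⟩ :=
      Metric.eventually_nhds_iff.mp (hc (mem_interior_iff_mem_nhds.mp hxi))
    have h1 : δ / 2 ∈ {t : ℝ | x - t • a ∈ A} := by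
      apply hb
      rw [Real.dist_eq, sub_zero, abs_of_pos (by positivity)]
      linarith
    have := le_csSup hbdd h1
    rw [h0] at this
    linarith
end

section
/- For every a ∈ Ω, the map ∂A × (0,∞) → Int(A) given by (x,t) ↦ x + t·a is a homeomorphism, where ∂A carries the subspace topology of ℝ^d and Int(A) denotes the interior of A. -/
theorem stmt_9 {d : ℕ} (P A : Set (EuclideanSpace ℝ (Fin d)))
    (hPclosed : IsClosed P) (hPconvex : Convex ℝ P)
    (hPcone : ∀ c : ℝ, 0 ≤ c → ∀ x ∈ P, c • x ∈ P)
    (hPspan : Submodule.span ℝ P = ⊤)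
    (hPline : ∀ x ∈ P, -x ∈ P → x = 0)
    (hAne : A.Nonempty) (hAclosed : IsClosed A)
    (hAmod : ∀ x ∈ A, ∀ p ∈ P, x + p ∈ A)
    (hAproper : A ≠ Set.univ)
    (a : EuclideanSpace ℝ (Fin d)) (ha : a ∈ interior P) :
    ∃ h : (frontier A) × (Set.Ioi (0 : ℝ)) ≃ₜ (interior A),
      ∀ (x : frontier A) (t : Set.Ioi (0 : ℝ)),
        (h (x, t) : EuclideanSpace ℝ (Fin d)) = (x : EuclideanSpace ℝ (Fin d)) + (t : ℝ) • a := by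
  obtain ⟨ε, hε, hball⟩ := Metric.mem_nhds_iff.1 (mem_interior_iff_mem_nhds.1 ha)
  -- key fact
  have K0 : ∀ y ∈ A, ∀ s : ℝ, 0 < s → ∀ w, ‖w - (y + s • a)‖ < s * ε → w ∈ A := by
    intro y hy s hs w hw
    have h1 : s⁻¹ • (w - y) ∈ P := by
      apply hball
      rw [mem_ball_iff_norm]
      have : s⁻¹ • (w - y) - a = s⁻¹ • (w - (y + s • a)) := by
        rw [← sub_sub, smul_sub s⁻¹ (w - y), smul_smul, inv_mul_cancel₀ hs.ne', one_smul]
      rw [this, norm_smul, Real.norm_of_nonneg (inv_nonneg.2 hs.le), inv_mul_lt_iff₀ hs]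
      exact hw
    have h2 := hAmod y hy _ (hPcone s hs.le _ h1)
    rw [smul_smul, mul_inv_cancel₀ hs.ne', one_smul] at h2
    simpa using h2
  have K : ∀ y ∈ A, ∀ s : ℝ, ∀ w, ‖w - (y + s • a)‖ < s * ε → w ∈ interior A := by
    intro y hy s w hw
    have hs : 0 < s := pos_of_mul_pos_left ((norm_nonneg _).trans_lt hw) hε.le
    refine interior_maximal (s := A) (t := Metric.ball (y + s • a) (s * ε)) ?_
      Metric.isOpen_ball (mem_ball_iff_norm.2 hw)
    intro v hv
    exact K0 y hy s hs v (mem_ball_iff_norm.1 hv)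
  have hfr : ∀ x, x ∈ frontier A → x ∈ A ∧ x ∉ interior A := by
    intro x hx
    rw [hAclosed.frontier_eq] at hx
    exact hx
  have Lip : ∀ y z : EuclideanSpace ℝ (Fin d), ∀ t t' : ℝ, y - t • a ∈ frontier A →
      z - t' • a ∈ frontier A → (t - t') * ε ≤ ‖z - y‖ := by
    intro y z t t' hy hz
    by_contra hc
    push Not at hc
    apply (hfr _ hz).2
    apply K _ (hfr _ hy).1 (t - t')
    have e : z - t' • a - (y - t • a + (t - t') • a) = z - y := by module
    rw [e]
    exact hc
  have Ex : ∀ y ∈ interior A, ∃ t : ℝ, 0 < t ∧ y - t • a ∈ frontier A := by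
    intro y hy
    obtain ⟨w, hw⟩ := (Set.ne_univ_iff_exists_notMem A).1 hAproper
    have hcont : Continuous (fun t : ℝ => y - t • a) := by fun_prop
    let S : Set ℝ := {t | y - t • a ∈ A}
    have hS0 : (0 : ℝ) ∈ S := by
      show y - (0 : ℝ) • a ∈ A
      simpa using interior_subset hy
    have hSb : BddAbove S := by
      refine ⟨‖w - y‖ / ε, fun t ht => ?_⟩
      by_contra hc
      push Not at hc
      rw [div_lt_iff₀ hε] at hc
      apply hw
      apply interior_subset
      apply K _ ht t
      simpa using hc
    have hSc : IsClosed S := hAclosed.preimage hcont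
    have hm : sSup S ∈ S := hSc.csSup_mem ⟨0, hS0⟩ hSb
    have hni : ∀ t : ℝ, y - t • a ∈ interior A → t < sSup S := by
      intro t ht
      have h1 : ∀ᶠ u in nhds t, y - u • a ∈ interior A :=
        hcont.continuousAt.eventually (isOpen_interior.mem_nhds ht)
      obtain ⟨u, hu, hu'⟩ := ((h1.filter_mono nhdsWithin_le_nhds).and
        (self_mem_nhdsWithin (s := Set.Ioi t))).exists
      exact lt_of_lt_of_le hu' (le_csSup hSb (show y - u • a ∈ A from interior_subset hu))
    refine ⟨sSup S, hni 0 (by simpa using hy), ?_⟩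
    rw [hAclosed.frontier_eq]
    exact ⟨hm, fun h => lt_irrefl _ (hni _ h)⟩
  choose! τ hτ0 hτ using Ex
  have hτc : ContinuousOn τ (interior A) := by
    apply LipschitzOnWith.continuousOn (K := (⟨ε⁻¹, (inv_pos.2 hε).le⟩ : NNReal))
    apply LipschitzOnWith.of_dist_le_mul
    intro y hy z hz
    have h1 := Lip y z _ _ (hτ y hy) (hτ z hz)
    have h2 := Lip z y _ _ (hτ z hz) (hτ y hy)
    rw [norm_sub_rev] at h1
    rw [Real.dist_eq, dist_eq_norm]
    show _ ≤ ε⁻¹ * _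
    rw [le_inv_mul_iff₀ hε, mul_comm]
    rcases abs_cases (τ y - τ z) with h | h <;> rw [h.1] <;> linarith
  have hτc' : Continuous (fun y : interior A => τ y) := hτc.domRestrict
  have hin : ∀ (x : frontier A) (t : Set.Ioi (0 : ℝ)),
      (x : EuclideanSpace ℝ (Fin d)) + (t : ℝ) • a ∈ interior A := by
    intro x t
    apply K x (hfr _ x.2).1 t
    rw [sub_self, norm_zero]
    exact mul_pos t.2 hε
  have huniq : ∀ (x : frontier A) (t : Set.Ioi (0 : ℝ)),
      τ ((x : EuclideanSpace ℝ (Fin d)) + (t : ℝ) • a) = t := by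
    intro x t
    have hx : (x : EuclideanSpace ℝ (Fin d)) + (t : ℝ) • a - (t : ℝ) • a ∈ frontier A := by
      simp
    have h1 := Lip _ _ _ _ (hτ _ (hin x t)) hx
    have h2 := Lip _ _ _ _ hx (hτ _ (hin x t))
    rw [sub_self, norm_zero] at h1 h2
    nlinarith
  refine ⟨{ toFun := fun p => ⟨(p.1 : EuclideanSpace ℝ (Fin d)) + (p.2 : ℝ) • a, hin p.1 p.2⟩
            invFun := fun y => (⟨(y : EuclideanSpace ℝ (Fin d)) - τ y • a, hτ y y.2⟩,
              ⟨τ y, hτ0 y y.2⟩)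
            left_inv := ?_
            right_inv := ?_
            continuous_toFun := ?_
            continuous_invFun := ?_ }, fun x t => rfl⟩
  · rintro ⟨x, t⟩
    ext1
    · apply Subtype.ext
      simp [huniq x t]
    · apply Subtype.ext
      exact huniq x t
  · intro y
    apply Subtype.ext
    simp
  · fun_prop
  · exact ((continuous_subtype_val.sub (hτc'.smul continuous_const)).subtype_mk _).prodMk
      (hτc'.subtype_mk _)
end

section
/- For every a ∈ Ω, the map ∂A × ℝ → ℝ^d given by (x,t) ↦ x + t·a is a homeomorphism (in particular it is a bijection: every point of ℝ^d is uniquely of the form x + t·a with x ∈ ∂A and t ∈ ℝ). -/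
theorem stmt_10 {d : ℕ} (P A : Set (EuclideanSpace ℝ (Fin d)))
    (hPclosed : IsClosed P) (hPconvex : Convex ℝ P)
    (hPcone : ∀ c : ℝ, 0 ≤ c → ∀ x ∈ P, c • x ∈ P)
    (hPspan : Submodule.span ℝ P = ⊤)
    (hPline : ∀ x ∈ P, -x ∈ P → x = 0)
    (hAne : A.Nonempty) (hAclosed : IsClosed A)
    (hAmod : ∀ x ∈ A, ∀ p ∈ P, x + p ∈ A)
    (hAproper : A ≠ Set.univ)
    (a : EuclideanSpace ℝ (Fin d)) (ha : a ∈ interior P) :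
    ∃ h : (frontier A) × ℝ ≃ₜ EuclideanSpace ℝ (Fin d),
      ∀ (x : frontier A) (t : ℝ),
        h (x, t) = (x : EuclideanSpace ℝ (Fin d)) + t • a := by
  have haP : a ∈ P := interior_subset ha
  obtain ⟨r, hr, hball⟩ : ∃ r > 0, Metric.closedBall a r ⊆ P :=
    Metric.nhds_basis_closedBall.mem_iff.1 (mem_interior_iff_mem_nhds.1 ha)
  have key : ∀ (v : EuclideanSpace ℝ (Fin d)) (t : ℝ), r⁻¹ * ‖v‖ ≤ t → v + t • a ∈ P := by
    intro v t ht
    have h0 : 0 ≤ r⁻¹ * ‖v‖ := by positivity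
    rcases (h0.trans ht).eq_or_lt with h | h
    · have hv : ‖v‖ = 0 := by
        have h1 : r⁻¹ * ‖v‖ = 0 := le_antisymm (h ▸ ht) h0
        rcases mul_eq_zero.1 h1 with h2 | h2
        · exact absurd h2 (by positivity)
        · exact h2
      rw [norm_eq_zero.1 hv, zero_add]
      exact hPcone t h.le a haP
    · have h1 : a + t⁻¹ • v ∈ P := by
        apply hball
        rw [Metric.mem_closedBall, dist_eq_norm, add_sub_cancel_left, norm_smul, norm_inv,
          Real.norm_of_nonneg h.le, inv_mul_le_iff₀ h]
        rw [inv_mul_le_iff₀ hr] at ht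
        linarith
      have h2 := hPcone t h.le _ h1
      rwa [smul_add, smul_smul, mul_inv_cancel₀ h.ne', one_smul, add_comm] at h2
  have key2 : ∀ x ∈ A, ∀ (y : EuclideanSpace ℝ (Fin d)) (t : ℝ),
      r⁻¹ * ‖y - x‖ ≤ t → y + t • a ∈ A := by
    intro x hx y t ht
    have := hAmod x hx _ (key (y - x) t ht)
    rwa [← add_assoc, add_sub_cancel] at this
  obtain ⟨x₀, hx₀⟩ := hAne
  obtain ⟨z, hz⟩ := (Set.ne_univ_iff_exists_notMem A).1 hAproper
  let S : EuclideanSpace ℝ (Fin d) → Set ℝ := fun y => {t | y + t • a ∈ A}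
  have hSne : ∀ y, (S y).Nonempty := fun y => ⟨_, key2 x₀ hx₀ y _ le_rfl⟩
  have hSbd : ∀ y, BddBelow (S y) := by
    intro y
    refine ⟨-(r⁻¹ * ‖z - y‖), fun t ht => ?_⟩
    by_contra hlt
    push Not at hlt
    apply hz
    have := hAmod _ ht _ (key (z - y) (-t) (by linarith))
    convert this using 1
    module
  have hScl : ∀ y, IsClosed (S y) := fun y =>
    hAclosed.preimage (f := fun t : ℝ => y + t • a) (by fun_prop)
  let τ : EuclideanSpace ℝ (Fin d) → ℝ := fun y => sInf (S y)
  have hτ : ∀ y t, y + t • a ∈ A ↔ τ y ≤ t := by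
    intro y t
    constructor
    · intro h
      exact csInf_le (hSbd y) h
    · intro h
      have h1 : y + τ y • a ∈ A := (hScl y).csInf_mem (hSne y) (hSbd y)
      have := hAmod _ h1 _ (hPcone (t - τ y) (by linarith) a haP)
      convert this using 1
      module
  have hτA : ∀ y, y ∈ A ↔ τ y ≤ 0 := by
    intro y
    have := hτ y 0
    rwa [zero_smul, add_zero] at this
  have hlip : ∀ y y', τ y' ≤ τ y + r⁻¹ * ‖y' - y‖ := by
    intro y y'
    rw [← hτ]
    have := key2 _ ((hτ y (τ y)).2 le_rfl) (y' + τ y • a) (r⁻¹ * ‖y' - y‖) (by simp)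
    convert this using 1
    module
  have hcont : Continuous τ := by
    have : LipschitzWith (Real.toNNReal r⁻¹) τ := by
      apply LipschitzWith.of_le_add_mul
      intro x y
      rw [Real.coe_toNNReal _ (by positivity), dist_eq_norm]
      exact hlip y x
    exact this.continuous
  have hadd : ∀ y s, τ (y + s • a) = τ y - s := by
    intro y s
    have h : ∀ t, τ (y + s • a) ≤ t ↔ τ y ≤ s + t := by
      intro t
      rw [← hτ, ← hτ, add_smul, add_assoc]
    apply le_antisymm
    · rw [h]; linarith
    · have := (h _).1 le_rfl
      linarith
  have hfr : ∀ x, x ∈ frontier A ↔ τ x = 0 := by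
    intro x
    constructor
    · intro hx
      have hA : A = {y | τ y ≤ 0} := Set.ext hτA
      rw [hA] at hx
      exact frontier_le_subset_eq hcont continuous_const hx
    · intro hx
      rw [hAclosed.frontier_eq]
      refine ⟨(hτA x).2 hx.le, fun hi => ?_⟩
      have hc : Continuous (fun s : ℝ => x + s • a) := by fun_prop
      have hn : (fun s : ℝ => x + s • a) ⁻¹' A ∈ nhds (0 : ℝ) := by
        apply hc.continuousAt
        simpa using mem_interior_iff_mem_nhds.1 hi
      obtain ⟨e, he, hsub⟩ := Metric.nhds_basis_closedBall.mem_iff.1 hn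
      have h1 : x + (-e) • a ∈ A := hsub (by simp [abs_of_pos he])
      rw [hτ] at h1
      linarith
  refine ⟨{ toFun := fun p => (p.1 : EuclideanSpace ℝ (Fin d)) + p.2 • a
            invFun := fun y => (⟨y + τ y • a, (hfr _).2 (by rw [hadd, sub_self])⟩, -τ y)
            left_inv := ?_
            right_inv := ?_
            continuous_toFun := by fun_prop
            continuous_invFun := ?_ }, fun x t => rfl⟩
  · rintro ⟨⟨x, hx⟩, t⟩
    have h0 := (hfr x).1 hx
    simp only [Prod.mk.injEq, Subtype.mk.injEq, hadd, h0]
    constructor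
    · module
    · ring
  · intro y
    simp
  · exact Continuous.prodMk (Continuous.subtype_mk (by fun_prop) _) (by fun_prop)
end

section
/- Let v_1, v_2, ..., v_d ∈ Ω be linearly independent vectors. Then the map B : ℝ^{d−1} → ∂A defined by B(r_1, ..., r_{d−1}) = Σ_{i=1}^{d−1} r_i v_i − ψ_{v_d}(Σ_{i=1}^{d−1} r_i v_i) · v_d is a homeomorphism from ℝ^{d−1} onto the boundary ∂A (with its subspace topology). -/
open Set Topology

section aux
variable {E : Type*} [NormedAddCommGroup E] [NormedSpace ℝ E]

lemma aux_K (P : Set E) (hPcone : ∀ c : ℝ, 0 ≤ c → ∀ x ∈ P, c • x ∈ P) (a : E)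
    (ha : a ∈ interior P) : ∃ K : ℝ, 0 < K ∧ ∀ w : E, ∀ s : ℝ, K * ‖w‖ < s → w + s • a ∈ P := by
  obtain ⟨ε, hε, hb⟩ := Metric.isOpen_iff.1 isOpen_interior a ha
  refine ⟨1 / ε, by positivity, fun w s hs => ?_⟩
  have hs0 : 0 < s := lt_of_le_of_lt (by positivity) hs
  have h1 : a + s⁻¹ • w ∈ P := by
    apply interior_subset
    apply hb
    rw [Metric.mem_ball, dist_eq_norm, add_sub_cancel_left, norm_smul, norm_inv,
      Real.norm_of_nonneg hs0.le, inv_mul_lt_iff₀ hs0]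
    rw [one_div, inv_mul_lt_iff₀ hε] at hs
    linarith [mul_comm s ε]
  have h2 := hPcone s hs0.le _ h1
  rwa [smul_add, smul_inv_smul₀ hs0.ne', add_comm] at h2

noncomputable def auxPsi (A : Set E) (a x : E) : ℝ := sSup {t : ℝ | x - t • a ∈ A}

lemma aux_main (P A : Set E) (hPcone : ∀ c : ℝ, 0 ≤ c → ∀ x ∈ P, c • x ∈ P)
    (hAne : A.Nonempty) (hAclosed : IsClosed A)
    (hAmod : ∀ x ∈ A, ∀ p ∈ P, x + p ∈ A) (hAproper : A ≠ Set.univ) (a : E)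
    (ha : a ∈ interior P) :
    (∀ x s, s ≤ auxPsi A a x ↔ x - s • a ∈ A) ∧ Continuous (auxPsi A a) := by
  obtain ⟨K, hK, hKP⟩ := aux_K P hPcone a ha
  have step : ∀ x y : E, ∀ t s : ℝ, K * ‖y - x‖ < t - s → x - t • a ∈ A → y - s • a ∈ A := by
    intro x y t s h hx
    have := hAmod _ hx _ (hKP (y - x) (t - s) h)
    rwa [show x - t • a + (y - x + (t - s) • a) = y - s • a by rw [sub_smul]; abel] at this
  have hne : ∀ x, {t : ℝ | x - t • a ∈ A}.Nonempty := by
    intro x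
    obtain ⟨y, hy⟩ := hAne
    exact ⟨-(K * ‖x - y‖ + 1), step y x 0 _ (by linarith) (by simpa using hy)⟩
  have hbd : ∀ x, BddAbove {t : ℝ | x - t • a ∈ A} := by
    intro x
    obtain ⟨y, hy⟩ := (Set.ne_univ_iff_exists_notMem A).1 hAproper
    refine ⟨K * ‖y - x‖, fun t ht => ?_⟩
    by_contra! hlt
    exact hy (by simpa using step x y t 0 (by linarith) ht)
  have hcl : ∀ x, IsClosed {t : ℝ | x - t • a ∈ A} := fun x =>
    hAclosed.preimage (f := fun t : ℝ => x - t • a) (by fun_prop)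
  have hiff : ∀ x s, s ≤ auxPsi A a x ↔ x - s • a ∈ A := by
    intro x s
    refine ⟨fun h => ?_, fun h => le_csSup (hbd x) h⟩
    have hm : x - auxPsi A a x • a ∈ A := (hcl x).csSup_mem (hne x) (hbd x)
    rcases h.eq_or_lt with h | h
    · rwa [h]
    · exact step x x _ s (by simpa using h) hm
  refine ⟨hiff, ?_⟩
  have hle : ∀ x y, auxPsi A a x ≤ auxPsi A a y + K * ‖y - x‖ := by
    intro x y
    refine le_of_forall_pos_le_add fun ε hε => ?_
    have := (hiff y (auxPsi A a x - K * ‖y - x‖ - ε)).2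
      (step x y _ _ (by linarith) ((hiff x _).1 le_rfl))
    linarith
  refine (LipschitzWith.of_le_add_mul (K := ⟨K, hK.le⟩) fun x y => ?_).continuous
  rw [dist_comm, dist_eq_norm]
  exact hle x y

lemma aux_frontier (A : Set E) (hAclosed : IsClosed A) (a : E)
    (hiff : ∀ x s, s ≤ auxPsi A a x ↔ x - s • a ∈ A) (hc : Continuous (auxPsi A a)) (x : E) :
    x ∈ frontier A ↔ auxPsi A a x = 0 := by
  rw [hAclosed.frontier_eq]
  have h0 : ∀ x, x ∈ A ↔ 0 ≤ auxPsi A a x := fun x => by rw [hiff]; simp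
  constructor
  · rintro ⟨h1, h2⟩
    by_contra hne
    have hpos : 0 < auxPsi A a x := lt_of_le_of_ne ((h0 x).1 h1) (Ne.symm hne)
    exact h2 (mem_interior.2 ⟨{y | 0 < auxPsi A a y}, fun y hy => (h0 y).2 (le_of_lt hy),
      isOpen_lt continuous_const hc, hpos⟩)
  · intro h
    refine ⟨(h0 x).2 h.ge, fun hi => ?_⟩
    have hcont : Continuous fun t : ℝ => x - t • a := by fun_prop
    have hn : (fun t : ℝ => x - t • a) ⁻¹' interior A ∈ 𝓝 (0 : ℝ) :=
      (isOpen_interior.preimage hcont).mem_nhds (by simpa using hi)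
    obtain ⟨ε, hε, hb⟩ := Metric.mem_nhds_iff.1 hn
    have : ε / 2 ∈ Metric.ball (0 : ℝ) ε := by
      rw [Metric.mem_ball, dist_zero_right, Real.norm_of_nonneg (by linarith)]; linarith
    have := (hiff x (ε / 2)).2 (interior_subset (hb this))
    linarith

lemma aux_shift (A : Set E) (a : E)
    (hiff : ∀ x s, s ≤ auxPsi A a x ↔ x - s • a ∈ A) (x : E) (t : ℝ) :
    auxPsi A a (x - t • a) = auxPsi A a x - t := by
  refine eq_of_forall_le_iff fun s => ?_
  rw [hiff, le_sub_iff_add_le, hiff, show x - t • a - s • a = x - (s + t) • a by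
    rw [add_smul]; abel]

end aux

/-- Let `P ⊆ ℝ^d` (`d = n+1`) be a closed convex cone spanning `ℝ^d`, containing no
line, with interior `Ω`, and `A` a `P`-module with `A ≠ ℝ^d`. Given linearly
independent `v_1, …, v_d ∈ Ω`, the map
`B(r) = ∑_{i<d} r_i v_i − ψ_{v_d}(∑_{i<d} r_i v_i) • v_d` (where
`ψ_a x = sup {t | x - t • a ∈ A}`) is a homeomorphism of `ℝ^{d-1}` onto `∂A`. -/
theorem stmt_11 {n : ℕ} (P A : Set (EuclideanSpace ℝ (Fin (n + 1))))
    (hPclosed : IsClosed P) (hPconvex : Convex ℝ P)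
    (hPcone : ∀ c : ℝ, 0 ≤ c → ∀ x ∈ P, c • x ∈ P)
    (hPspan : Submodule.span ℝ P = ⊤)
    (hPline : ∀ x ∈ P, -x ∈ P → x = 0)
    (hAne : A.Nonempty) (hAclosed : IsClosed A)
    (hAmod : ∀ x ∈ A, ∀ p ∈ P, x + p ∈ A)
    (hAproper : A ≠ Set.univ)
    (v : Fin (n + 1) → EuclideanSpace ℝ (Fin (n + 1)))
    (hvΩ : ∀ i, v i ∈ interior P) (hvind : LinearIndependent ℝ v) :
    ∃ h : EuclideanSpace ℝ (Fin n) ≃ₜ frontier A,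
      ∀ r : EuclideanSpace ℝ (Fin n),
        (h r : EuclideanSpace ℝ (Fin (n + 1))) =
          (∑ i : Fin n, r i • v i.castSucc) -
            sSup {t : ℝ | (∑ i : Fin n, r i • v i.castSucc) - t • v (Fin.last n) ∈ A}
              • v (Fin.last n) := by
  have ha := hvΩ (Fin.last n)
  set a := v (Fin.last n) with ha_def
  obtain ⟨hiff, hc⟩ := aux_main P A hPcone hAne hAclosed hAmod hAproper a ha
  have hfr := aux_frontier A hAclosed a hiff hc
  have hsh := aux_shift A a hiff
  let b := basisOfLinearIndependentOfCardEqFinrank hvind (by simp)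
  have hb : ∀ i, b i = v i := fun i => by simp [b]
  let L : EuclideanSpace ℝ (Fin n) → EuclideanSpace ℝ (Fin (n + 1)) :=
    fun r => ∑ i : Fin n, r i • v i.castSucc
  have hL : Continuous L := by fun_prop
  let c : EuclideanSpace ℝ (Fin (n + 1)) → EuclideanSpace ℝ (Fin n) :=
    fun x => WithLp.toLp 2 (fun i => b.coord i.castSucc x)
  have hcc : Continuous c := by
    refine (PiLp.continuous_toLp 2 _).comp (continuous_pi fun i => ?_)
    exact (b.coord i.castSucc).continuous_of_finiteDimensional
  have hcL : ∀ r, ∀ s : ℝ, c (L r - s • a) = r := by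
    intro r s
    ext j
    simp only [c, L, ha_def, ← hb]
    simp [Finsupp.single_apply, (Fin.castSucc_lt_last j).ne']
  have hLc : ∀ x, L (c x) = x - b.coord (Fin.last n) x • a := by
    intro x
    rw [eq_sub_iff_add_eq]
    conv_rhs => rw [← b.sum_repr x, Fin.sum_univ_castSucc]
    simp [L, c, hb, ha_def]
  let e : EuclideanSpace ℝ (Fin n) ≃ₜ frontier A :=
    { toFun := fun r => ⟨L r - auxPsi A a (L r) • a, by rw [hfr, hsh, sub_self]⟩
      invFun := fun x => c x
      left_inv := fun r => hcL r _
      right_inv := fun x => by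
        apply Subtype.ext
        have h0 := (hfr x).1 x.2
        simp only [hLc, hsh, h0]
        simp
      continuous_toFun := by
        refine Continuous.subtype_mk ?_ _
        exact hL.sub ((hc.comp hL).smul continuous_const)
      continuous_invFun := hcc.comp continuous_subtype_val }
  exact ⟨e, fun r => rfl⟩
end

section
/- Let n ≥ 1 and let φ : ℝ^n → ℝ be a continuous function such that φ(r + c) = φ(r) + φ(c) for every r ∈ ℝ^n and every c ∈ ℝ^n all of whose coordinates are strictly positive. Then there exists a unique μ ∈ ℝ^n such that φ(r) = ⟨r, μ⟩ (the standard inner product) for all r ∈ ℝ^n. -/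
open scoped RealInnerProductSpace

/-- Let `n ≥ 1` and `φ : ℝ^n → ℝ` be continuous with `φ (r + c) = φ r + φ c` for every
`r` and every `c` with all coordinates strictly positive. Then there is a unique
`μ ∈ ℝ^n` with `φ r = ⟪r, μ⟫` for all `r`. -/
theorem stmt_13 {n : ℕ} (hn : 1 ≤ n) (φ : EuclideanSpace ℝ (Fin n) → ℝ)
    (hφcont : Continuous φ)
    (hφ : ∀ r c : EuclideanSpace ℝ (Fin n), (∀ i, 0 < c i) → φ (r + c) = φ r + φ c) :
    ∃! μ : EuclideanSpace ℝ (Fin n), ∀ r, φ r = ⟪r, μ⟫ := by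
  have hadd : ∀ r s, φ (r + s) = φ r + φ s := by
    intro r s
    let c : EuclideanSpace ℝ (Fin n) := WithLp.toLp 2 (fun i => |s i| + 1)
    have hci : ∀ i, c i = |s i| + 1 := fun i => rfl
    have hc : ∀ i, 0 < c i := fun i => by rw [hci]; positivity
    have hsc : ∀ i, 0 < (s + c) i := fun i => by
      rw [PiLp.add_apply, hci]; linarith [neg_abs_le (s i)]
    have h1 := hφ r (s + c) hsc
    have h2 := hφ s c hc
    have h3 := hφ (r + s) c hc
    rw [add_assoc] at h3
    linarith
  let f : EuclideanSpace ℝ (Fin n) →+ ℝ := AddMonoidHom.mk' φ hadd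
  let L : EuclideanSpace ℝ (Fin n) →L[ℝ] ℝ := f.toRealLinearMap hφcont
  have hL : ∀ r, L r = φ r := fun r => rfl
  refine ⟨(InnerProductSpace.toDual ℝ _).symm L, ?_, ?_⟩
  · intro r
    rw [real_inner_comm, InnerProductSpace.toDual_symm_apply, hL]
  · intro ν hν
    refine ext_inner_left ℝ fun r => ?_
    rw [← hν r, real_inner_comm, InnerProductSpace.toDual_symm_apply, hL]
end
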